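/- arXiv:2208.03180 — 2 statements merged into one kernel-verified Lean document; each statement's English description precedes it below -/
import Mathlib

section
/- Internal-wave eigenvector comparison (coefficient form of estimate (5.45) in Corollary 5.4). Let 0 < η ≤ 1, k_h ∈ 2πℤ² ∖ {0}, k_z ∈ 2πℤ ∖ {0}, a := |k_h|², and set ω := ω^gw(η,k_h,k_z) and ω_sp := ω^gw_sp(η,k_h,k_z). Define u := (1, (η/k_z)(a/ω² − 1), k_h/ω, −i(ω/k_z)(a/ω² − 1)) ∈ ℂ⁵, the Fourier coefficient vector of the compressible internal-wave eigenmode U^gw_{+,(k_h,k_z)}, and u_sp := (1, ηa/(k_zω_sp²), k_h/ω_sp, −ia/(k_zω_sp)) ∈ ℂ⁵, the Fourier coefficient vector of the soundproof pair (εp^gw_{sp,(k_h,k_z)}, U^gw_{sp,+,(k_h,k_z)}). Then |u − u_sp| ≤ 10η in the Euclidean norm of ℂ⁵, uniformly in (k_h, k_z). -/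
open Complex

noncomputable section

/-- The perturbed internal-wave frequency
`ω^gw(η,k_h,k_z) = (2η²a/(S + √A))^{1/2}`, with `a = |k_h|²`, `b = k_z²`,
`S = a + b + η²`, `A = S² − 4η²a`. -/
def omegaGW (η a b : ℝ) : ℝ :=
  Real.sqrt (2 * η ^ 2 * a /
    ((a + b + η ^ 2) + Real.sqrt ((a + b + η ^ 2) ^ 2 - 4 * η ^ 2 * a)))

/-- The soundproof internal-wave frequency `ω^gw_sp(η,k_h,k_z) = η|k_h|/(a+b)^{1/2}`. -/
def omegaGWsp (η a b : ℝ) : ℝ := η * Real.sqrt a / Real.sqrt (a + b)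

/-- Euclidean norm of a vector in `ℂ⁵`. -/
def vnorm (u : Fin 5 → ℂ) : ℝ := Real.sqrt (∑ i, ‖u i‖ ^ 2)

/-!
With `ω = ω^gw` and `ω_sp = ω^gw_sp`, dividing the dispersion relation
`ω⁴ - (a + b + η²)ω² + η²a = 0` by `η²ω²` gives `a/ω² - a/ω_sp² = 1 - ω²/η²`, whose right-hand side
lies in `[0, 1]` because `ω ≤ ω_sp ≤ η`. Factoring the left-hand side as
`a(1/ω - 1/ω_sp)(1/ω + 1/ω_sp)` yields `0 ≤ a(1/ω - 1/ω_sp) ≤ ω_sp ≤ η`. Hence the second and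
fifth entries of `u - u_sp`, which are `-ω²/(ηk_z)` and `-i(a(1/ω - 1/ω_sp) - ω)/k_z`, and the
horizontal part `(1/ω - 1/ω_sp)k_h`, of norm at most `ω_sp/√a = η/√(a + b)`, are each bounded by
`η/|k_z|`.
-/

section Frequencies

variable {η a b : ℝ}

lemma sq_le_omegaGW_discrim (hb : 0 ≤ b) :
    (a + b - η ^ 2) ^ 2 ≤ (a + b + η ^ 2) ^ 2 - 4 * η ^ 2 * a := by
  have : 0 ≤ η ^ 2 * b := by positivity
  linarith

lemma omegaGW_sq (ha : 0 ≤ a) (hb : 0 ≤ b) :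
    omegaGW η a b ^ 2 = 2 * η ^ 2 * a /
      ((a + b + η ^ 2) + √((a + b + η ^ 2) ^ 2 - 4 * η ^ 2 * a)) :=
  Real.sq_sqrt (by positivity)

lemma omegaGWsp_sq (ha : 0 ≤ a) (hb : 0 ≤ b) :
    omegaGWsp η a b ^ 2 = η ^ 2 * a / (a + b) := by
  rw [omegaGWsp, div_pow, mul_pow, Real.sq_sqrt ha, Real.sq_sqrt (add_nonneg ha hb)]

lemma omegaGW_pos (hη : η ≠ 0) (ha : 0 < a) (hb : 0 ≤ b) : 0 < omegaGW η a b :=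
  Real.sqrt_pos.2 (by positivity)

lemma omegaGWsp_pos (hη : 0 < η) (ha : 0 < a) (hb : 0 ≤ b) : 0 < omegaGWsp η a b :=
  div_pos (mul_pos hη (Real.sqrt_pos.2 ha)) (Real.sqrt_pos.2 (by positivity))

lemma omegaGW_dispersion_relation (ha : 0 < a) (hb : 0 ≤ b) :
    omegaGW η a b ^ 4 - (a + b + η ^ 2) * omegaGW η a b ^ 2 + η ^ 2 * a = 0 := by
  have hdiscrim : √((a + b + η ^ 2) ^ 2 - 4 * η ^ 2 * a) ^ 2
      = (a + b + η ^ 2) ^ 2 - 4 * η ^ 2 * a :=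
    Real.sq_sqrt ((sq_nonneg _).trans (sq_le_omegaGW_discrim hb))
  have hdenom : 0 < (a + b + η ^ 2) + √((a + b + η ^ 2) ^ 2 - 4 * η ^ 2 * a) := by positivity
  rw [show omegaGW η a b ^ 4 = (omegaGW η a b ^ 2) ^ 2 by ring, omegaGW_sq ha.le hb]
  generalize √((a + b + η ^ 2) ^ 2 - 4 * η ^ 2 * a) = R at hdiscrim hdenom
  field_simp
  linear_combination η ^ 2 * a * hdiscrim

lemma omegaGW_le_omegaGWsp (hη : 0 ≤ η) (ha : 0 < a) (hb : 0 ≤ b) :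
    omegaGW η a b ≤ omegaGWsp η a b := by
  have hsqrt : a + b - η ^ 2 ≤ √((a + b + η ^ 2) ^ 2 - 4 * η ^ 2 * a) :=
    Real.le_sqrt_of_sq_le (sq_le_omegaGW_discrim hb)
  refine le_of_sq_le_sq ?_ (by unfold omegaGWsp; positivity)
  calc omegaGW η a b ^ 2
      = 2 * η ^ 2 * a / ((a + b + η ^ 2) + √((a + b + η ^ 2) ^ 2 - 4 * η ^ 2 * a)) :=
        omegaGW_sq ha.le hb
    _ ≤ 2 * η ^ 2 * a / (2 * (a + b)) := by gcongr; linarith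
    _ = η ^ 2 * a / (a + b) := by rw [mul_assoc, mul_div_mul_left _ _ two_ne_zero]
    _ = omegaGWsp η a b ^ 2 := (omegaGWsp_sq ha.le hb).symm

lemma omegaGWsp_le (hη : 0 ≤ η) (hb : 0 ≤ b) : omegaGWsp η a b ≤ η := by
  rw [omegaGWsp, mul_div_assoc]
  exact mul_le_of_le_one_right hη
    (div_le_one_of_le₀ (Real.sqrt_le_sqrt (le_add_of_nonneg_right hb)) (Real.sqrt_nonneg _))

lemma omegaGW_le (hη : 0 ≤ η) (ha : 0 < a) (hb : 0 ≤ b) : omegaGW η a b ≤ η :=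
  (omegaGW_le_omegaGWsp hη ha hb).trans (omegaGWsp_le hη hb)

lemma div_omegaGW_sq_sub_div_omegaGWsp_sq (hη : η ≠ 0) (ha : 0 < a) (hb : 0 ≤ b) :
    a / omegaGW η a b ^ 2 - a / omegaGWsp η a b ^ 2 = 1 - omegaGW η a b ^ 2 / η ^ 2 := by
  have hω := (omegaGW_pos hη ha hb).ne'
  have hsp : a / omegaGWsp η a b ^ 2 = (a + b) / η ^ 2 := by
    rw [omegaGWsp_sq ha.le hb]
    field_simp
  rw [hsp]
  field_simp
  linear_combination omegaGW_dispersion_relation (η := η) ha hb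

lemma inv_omegaGW_sub_inv_omegaGWsp_nonneg (hη : 0 < η) (ha : 0 < a) (hb : 0 ≤ b) :
    0 ≤ (omegaGW η a b)⁻¹ - (omegaGWsp η a b)⁻¹ :=
  sub_nonneg.2 (inv_anti₀ (omegaGW_pos hη.ne' ha hb) (omegaGW_le_omegaGWsp hη.le ha hb))

lemma mul_inv_omegaGW_sub_inv_omegaGWsp_le (hη : 0 < η) (ha : 0 < a) (hb : 0 ≤ b) :
    a * ((omegaGW η a b)⁻¹ - (omegaGWsp η a b)⁻¹) ≤ omegaGWsp η a b := by
  have hω := omegaGW_pos hη.ne' ha hb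
  have hωsp := omegaGWsp_pos hη ha hb
  have hδ := inv_omegaGW_sub_inv_omegaGWsp_nonneg hη ha hb
  have hdiff := div_omegaGW_sq_sub_div_omegaGWsp_sq hη.ne' ha hb
  set ω := omegaGW η a b
  set ωsp := omegaGWsp η a b
  rw [← div_le_one₀ hωsp]
  calc a * (ω⁻¹ - ωsp⁻¹) / ωsp
      = a * (ω⁻¹ - ωsp⁻¹) * ωsp⁻¹ := div_eq_mul_inv _ _
    _ ≤ a * (ω⁻¹ - ωsp⁻¹) * (ω⁻¹ + ωsp⁻¹) := by gcongr; simpa using hω.le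
    _ = a / ω ^ 2 - a / ωsp ^ 2 := by ring
    _ = 1 - ω ^ 2 / η ^ 2 := hdiff
    _ ≤ 1 := sub_le_self _ (by positivity)

lemma mul_inv_omegaGW_sub_inv_omegaGWsp_sq_le (hη : 0 < η) (ha : 0 < a) (hb : 0 ≤ b) :
    a * ((omegaGW η a b)⁻¹ - (omegaGWsp η a b)⁻¹) ^ 2 ≤ η ^ 2 / (a + b) := by
  have hδ := inv_omegaGW_sub_inv_omegaGWsp_nonneg hη ha hb
  have hle := mul_inv_omegaGW_sub_inv_omegaGWsp_le hη ha hb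
  set δ := (omegaGW η a b)⁻¹ - (omegaGWsp η a b)⁻¹
  calc a * δ ^ 2 = (a * δ) ^ 2 / a := by field_simp
    _ ≤ omegaGWsp η a b ^ 2 / a := by gcongr
    _ = η ^ 2 / (a + b) := by
      rw [omegaGWsp_sq ha.le hb]
      field_simp

end Frequencies

section Components

variable {η a b : ℝ}

lemma abs_buoyancy_sub_le (hη : 0 < η) (ha : 0 < a) (hb : 0 ≤ b) (kz : ℝ) :
    |η / kz * (a / omegaGW η a b ^ 2 - 1) - η * a / (kz * omegaGWsp η a b ^ 2)| ≤ η / |kz| := by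
  have hdiff := div_omegaGW_sq_sub_div_omegaGWsp_sq hη.ne' ha hb
  have hω := omegaGW_pos hη.ne' ha hb
  have hle := omegaGW_le hη.le ha hb
  set ω := omegaGW η a b
  have heq : η / kz * (a / ω ^ 2 - 1) - η * a / (kz * omegaGWsp η a b ^ 2)
      = -(ω ^ 2 / η) / kz := by
    calc η / kz * (a / ω ^ 2 - 1) - η * a / (kz * omegaGWsp η a b ^ 2)
        = η / kz * (a / ω ^ 2 - a / omegaGWsp η a b ^ 2 - 1) := by ring
      _ = -(ω ^ 2 / η) / kz := by rw [hdiff]; field_simp; ring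
  rw [heq, abs_div, abs_neg, abs_of_pos (by positivity)]
  gcongr
  rw [div_le_iff₀ hη, ← sq]
  gcongr

lemma abs_verticalVelocity_sub_le (hη : 0 < η) (ha : 0 < a) (hb : 0 ≤ b) (kz : ℝ) :
    |omegaGW η a b / kz * (a / omegaGW η a b ^ 2 - 1) - a / (kz * omegaGWsp η a b)|
      ≤ η / |kz| := by
  have hδ := mul_nonneg ha.le (inv_omegaGW_sub_inv_omegaGWsp_nonneg hη ha hb)
  have hδle := (mul_inv_omegaGW_sub_inv_omegaGWsp_le hη ha hb).trans (omegaGWsp_le hη.le hb)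
  have hω := omegaGW_pos hη.ne' ha hb
  have hle := omegaGW_le hη.le ha hb
  set ω := omegaGW η a b
  set ωsp := omegaGWsp η a b
  have heq : ω / kz * (a / ω ^ 2 - 1) - a / (kz * ωsp) = (a * (ω⁻¹ - ωsp⁻¹) - ω) / kz := by
    have : ω / ω ^ 2 = ω⁻¹ := by field_simp
    linear_combination a / kz * this
  rw [heq, abs_div]
  gcongr
  exact abs_sub_le_of_nonneg_of_le hδ hδle hω.le hle

lemma sum_horizontalVelocity_sub_sq_le {ι : Type*} [Fintype ι] (hη : 0 < η) (ha : 0 < a)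
    (hb : 0 ≤ b) (kh : ι → ℝ) (hkh : ∑ i, kh i ^ 2 = a) :
    ∑ i, (kh i / omegaGW η a b - kh i / omegaGWsp η a b) ^ 2 ≤ η ^ 2 / (a + b) := by
  have heq : ∑ i, (kh i / omegaGW η a b - kh i / omegaGWsp η a b) ^ 2
      = a * ((omegaGW η a b)⁻¹ - (omegaGWsp η a b)⁻¹) ^ 2 := by
    rw [← hkh, Finset.sum_mul]
    simp only [div_eq_mul_inv, ← mul_sub, mul_pow]
  exact heq.trans_le (mul_inv_omegaGW_sub_inv_omegaGWsp_sq_le hη ha hb)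

end Components

section Modes

/-- The squared horizontal wave number `a = |k_h|²`. -/
def horizontalSq (kh : Fin 2 → ℝ) : ℝ := kh 0 ^ 2 + kh 1 ^ 2

/-- The Fourier coefficient vector in `ℂ⁵` of a mode with unit pressure, buoyancy `θ`, horizontal
velocity `v` and vertical velocity `-iw`, so that all parameters are real. -/
def modeVector (θ : ℝ) (v : Fin 2 → ℝ) (w : ℝ) : Fin 5 → ℂ :=
  ![1, (θ : ℂ), (v 0 : ℂ), (v 1 : ℂ), -I * (w : ℂ)]

/-- The coefficient vector `u` of the compressible internal-wave eigenmode `U^gw_{+,(k_h,k_z)}`. -/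
def gwVector (η : ℝ) (kh : Fin 2 → ℝ) (kz : ℝ) : Fin 5 → ℂ :=
  let a := horizontalSq kh
  let ω := omegaGW η a (kz ^ 2)
  modeVector (η / kz * (a / ω ^ 2 - 1)) (fun i => kh i / ω) (ω / kz * (a / ω ^ 2 - 1))

/-- The coefficient vector `u_sp` of the soundproof pair
`(εp^gw_{sp,(k_h,k_z)}, U^gw_{sp,+,(k_h,k_z)})`. -/
def gwspVector (η : ℝ) (kh : Fin 2 → ℝ) (kz : ℝ) : Fin 5 → ℂ :=
  let a := horizontalSq kh
  let ωsp := omegaGWsp η a (kz ^ 2)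
  modeVector (η * a / (kz * ωsp ^ 2)) (fun i => kh i / ωsp) (a / (kz * ωsp))

lemma horizontalSq_eq_sum (kh : Fin 2 → ℝ) : horizontalSq kh = ∑ i, kh i ^ 2 :=
  (Fin.sum_univ_two fun i => kh i ^ 2).symm

lemma horizontalSq_pos {kh : Fin 2 → ℝ} (hkh : kh ≠ 0) : 0 < horizontalSq kh := by
  obtain ⟨i, hi⟩ := Function.ne_iff.1 hkh
  rw [horizontalSq_eq_sum]
  exact Finset.sum_pos' (fun j _ => sq_nonneg (kh j)) ⟨i, Finset.mem_univ i, sq_pos_of_ne_zero hi⟩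

lemma vnorm_modeVector_sub (θ θ' : ℝ) (v v' : Fin 2 → ℝ) (w w' : ℝ) :
    vnorm (modeVector θ v w - modeVector θ' v' w')
      = √((θ - θ') ^ 2 + ∑ i, (v i - v' i) ^ 2 + (w - w') ^ 2) := by
  have hreal (x y : ℝ) : ‖(x : ℂ) - y‖ ^ 2 = (x - y) ^ 2 := by
    rw [← ofReal_sub, norm_real, Real.norm_eq_abs, sq_abs]
  have himag (x y : ℝ) : ‖-I * (x : ℂ) - -I * y‖ ^ 2 = (x - y) ^ 2 := by
    rw [← mul_sub, norm_mul, norm_neg, norm_I, one_mul, hreal]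
  have hone : ‖(1 : ℂ) - 1‖ ^ 2 = 0 := by simp
  unfold vnorm
  congr 1
  calc ∑ i, ‖(modeVector θ v w - modeVector θ' v' w') i‖ ^ 2
      = ‖(1 : ℂ) - 1‖ ^ 2 + ‖(θ : ℂ) - θ'‖ ^ 2 + ‖(v 0 : ℂ) - v' 0‖ ^ 2
        + ‖(v 1 : ℂ) - v' 1‖ ^ 2 + ‖-I * (w : ℂ) - -I * w'‖ ^ 2 := Fin.sum_univ_five _
    _ = (θ - θ') ^ 2 + ∑ i, (v i - v' i) ^ 2 + (w - w') ^ 2 := by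
      rw [hone, hreal, hreal, hreal, himag, Fin.sum_univ_two]
      ring

end Modes

lemma one_le_abs_two_pi_mul_intCast {n : ℤ} (hn : n ≠ 0) : 1 ≤ |2 * Real.pi * (n : ℝ)| := by
  have hn' : (1 : ℝ) ≤ |(n : ℝ)| := by exact_mod_cast Int.one_le_abs hn
  rw [abs_mul, abs_of_pos Real.two_pi_pos]
  exact one_le_mul_of_one_le_of_one_le (by linarith [Real.pi_gt_three]) hn'

theorem stmt_18_general {η : ℝ} (hη : 0 < η) {kh : Fin 2 → ℝ} (hkh : kh ≠ 0) {kz : ℝ}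
    (hkz : kz ≠ 0) : vnorm (gwVector η kh kz - gwspVector η kh kz) ≤ √3 * (η / |kz|) := by
  have ha := horizontalSq_pos hkh
  have hb := sq_nonneg kz
  have hbuoyancy := sq_le_sq₀ (abs_nonneg _) (by positivity) |>.2 (abs_buoyancy_sub_le hη ha hb kz)
  have hvertical :=
    sq_le_sq₀ (abs_nonneg _) (by positivity) |>.2 (abs_verticalVelocity_sub_le hη ha hb kz)
  have hhorizontal := calc
    _ ≤ η ^ 2 / (horizontalSq kh + kz ^ 2) :=
      sum_horizontalVelocity_sub_sq_le hη ha hb kh (horizontalSq_eq_sum kh).symm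
    _ ≤ η ^ 2 / kz ^ 2 := by gcongr; linarith
    _ = (η / |kz|) ^ 2 := by rw [div_pow, sq_abs]
  rw [sq_abs] at hbuoyancy hvertical
  rw [gwVector, gwspVector, vnorm_modeVector_sub]
  calc _ ≤ √(3 * (η / |kz|) ^ 2) := Real.sqrt_le_sqrt (by linarith)
    _ = √3 * (η / |kz|) := by
      rw [Real.sqrt_mul (by norm_num), Real.sqrt_sq (by positivity)]

/-- Internal-wave eigenvector comparison, coefficient form of
estimate (5.45) in Corollary 5.4.  Let `0 < η ≤ 1`, `k_h ∈ 2πℤ² ∖ {0}`,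
`k_z ∈ 2πℤ ∖ {0}`, `a := |k_h|²`, `ω := ω^gw`, `ω_sp := ω^gw_sp`.  With
`u := (1, (η/k_z)(a/ω² − 1), k_h/ω, −i(ω/k_z)(a/ω² − 1))` (Fourier coefficient
vector of the compressible internal-wave eigenmode) and
`u_sp := (1, ηa/(k_zω_sp²), k_h/ω_sp, −ia/(k_zω_sp))` (Fourier coefficient
vector of the soundproof pair), one has `|u − u_sp| ≤ 10η` in the Euclidean
norm of `ℂ⁵`, uniformly in `(k_h,k_z)`. -/
theorem stmt_18 (η : ℝ) (hη0 : 0 < η) (hη1 : η ≤ 1)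
    (m : Fin 2 → ℤ) (hm : m ≠ 0) (n : ℤ) (hn : n ≠ 0) :
    let kh : Fin 2 → ℝ := fun i => 2 * Real.pi * (m i : ℝ)
    let kz : ℝ := 2 * Real.pi * (n : ℝ)
    let a : ℝ := kh 0 ^ 2 + kh 1 ^ 2
    let b : ℝ := kz ^ 2
    let ω : ℝ := omegaGW η a b
    let ωsp : ℝ := omegaGWsp η a b
    let u : Fin 5 → ℂ :=
      ![1, (((η / kz) * (a / ω ^ 2 - 1) : ℝ) : ℂ), ((kh 0 / ω : ℝ) : ℂ),
        ((kh 1 / ω : ℝ) : ℂ), -I * (((ω / kz) * (a / ω ^ 2 - 1) : ℝ) : ℂ)]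
    let usp : Fin 5 → ℂ :=
      ![1, ((η * a / (kz * ωsp ^ 2) : ℝ) : ℂ), ((kh 0 / ωsp : ℝ) : ℂ),
        ((kh 1 / ωsp : ℝ) : ℂ), -I * ((a / (kz * ωsp) : ℝ) : ℂ)]
    vnorm (fun i => u i - usp i) ≤ 10 * η := by
  intro kh kz _ _ _ _ _ _
  have hkz : 1 ≤ |kz| := one_le_abs_two_pi_mul_intCast hn
  have hkh : kh ≠ 0 := by
    obtain ⟨i, hi⟩ := Function.ne_iff.1 hm
    exact Function.ne_iff.2 ⟨i, mul_ne_zero Real.two_pi_pos.ne' (Int.cast_ne_zero.2 hi)⟩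
  calc vnorm (gwVector η kh kz - gwspVector η kh kz)
      ≤ √3 * (η / |kz|) := stmt_18_general hη0 hkh (abs_pos.1 (by linarith))
    _ ≤ 10 * η := by
      gcongr
      · exact Real.sqrt_le_iff.2 (by norm_num)
      · exact div_le_self hη0.le hkz
end
end

section
/- Acoustic eigenvector comparison (coefficient form of estimate (5.47) in Corollary 5.4). Let 0 < η ≤ 1, k_h ∈ 2πℤ², k_z ∈ 2πℤ ∖ {0}, a := |k_h|², and set ω := ω^aw(η,k_h,k_z) and ω_a := ω^aw_a(k_h,k_z). Define u := (1, (η/k_z)(a/ω² − 1), k_h/ω, −i(ω/k_z)(a/ω² − 1)) ∈ ℂ⁵, the Fourier coefficient vector of the perturbed acoustic eigenmode U^aw_{+,(k_h,k_z)}, and u_a := (1, 0, k_h/ω_a, ik_z/ω_a) ∈ ℂ⁵, the Fourier coefficient vector of the pure acoustic eigenmode U^aw_{a,+,(k_h,k_z)}. Then |u − u_a| ≤ 10η in the Euclidean norm of ℂ⁵, uniformly in (k_h, k_z). -/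
open Complex

noncomputable section

/-- The perturbed acoustic frequency
`ω^aw(η,k_h,k_z) = ((S + √A)/2)^{1/2}`, with `a = |k_h|²`, `b = k_z²`,
`S = a + b + η²`, `A = S² − 4η²a`. -/
def omegaAW (η a b : ℝ) : ℝ :=
  Real.sqrt (((a + b + η ^ 2) + Real.sqrt ((a + b + η ^ 2) ^ 2 - 4 * η ^ 2 * a)) / 2)

/-- The pure acoustic frequency `ω^aw_a(k_h,k_z) = (a + b)^{1/2}`. -/
def omegaAWa (a b : ℝ) : ℝ := Real.sqrt (a + b)

/-!
The discriminant satisfies `A = (a + b - η²)² + 4η²b ≥ (a + b - η²)²`, so the larger root `ω²` of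
the characteristic quartic dominates both `ω_a² = a + b` and `η²`, while `ω² ≤ ω_a² + η²`.
Hence `ω - ω_a ≤ |η|` and `ω² - ω_a² ≤ η² ≤ |η| ω`, for every size of `η`. After
multiplication by `k_z`, the second entry, the horizontal part and the last entry of `u - u_a` are
each of size at most `|η|`; the last one becomes the difference of `k_z² (1/ω_a - 1/ω)` and
`(ω² - ω_a²)/ω`, up to a unit factor, and both of these lie in `[0, |η|]`.
-/

section Frequencies

variable {η a b : ℝ}

lemma omegaAW_nonneg : 0 ≤ omegaAW η a b := Real.sqrt_nonneg _

lemma abs_add_sub_sq_le_sqrt_discrim (hb : 0 ≤ b) :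
    |a + b - η ^ 2| ≤ √((a + b + η ^ 2) ^ 2 - 4 * η ^ 2 * a) := by
  have discrim_eq : (a + b + η ^ 2) ^ 2 - 4 * η ^ 2 * a
      = (a + b - η ^ 2) ^ 2 + 4 * η ^ 2 * b := by ring
  rw [discrim_eq]
  exact Real.abs_le_sqrt (le_add_of_nonneg_right (by positivity))

lemma max_le_sq_omegaAW (hb : 0 ≤ b) : max (a + b) (η ^ 2) ≤ omegaAW η a b ^ 2 := by
  have hA := abs_le.mp (abs_add_sub_sq_le_sqrt_discrim (η := η) (a := a) hb)
  rw [omegaAW, Real.sq_sqrt']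
  exact le_max_of_le_left (max_le (by linarith) (by linarith))

lemma sq_omegaAW_le (ha : 0 ≤ a) (hb : 0 ≤ b) : omegaAW η a b ^ 2 ≤ a + b + η ^ 2 := by
  have hA : √((a + b + η ^ 2) ^ 2 - 4 * η ^ 2 * a) ≤ a + b + η ^ 2 :=
    Real.sqrt_le_iff.mpr ⟨by positivity, sub_le_self _ (by positivity)⟩
  rw [omegaAW, Real.sq_sqrt (by positivity)]
  linarith

lemma abs_le_omegaAW (hb : 0 ≤ b) : |η| ≤ omegaAW η a b :=
  abs_le_of_sq_le_sq ((le_max_right _ _).trans (max_le_sq_omegaAW hb)) omegaAW_nonneg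

lemma omegaAWa_le_omegaAW (hb : 0 ≤ b) : omegaAWa a b ≤ omegaAW η a b :=
  Real.sqrt_le_iff.mpr ⟨omegaAW_nonneg, (le_max_left _ _).trans (max_le_sq_omegaAW hb)⟩

lemma sq_omegaAWa (hab : 0 ≤ a + b) : omegaAWa a b ^ 2 = a + b := Real.sq_sqrt hab

lemma omegaAWa_pos (hab : 0 < a + b) : 0 < omegaAWa a b := Real.sqrt_pos.mpr hab

lemma sq_omegaAW_sub_sq_omegaAWa_le (ha : 0 ≤ a) (hb : 0 ≤ b) :
    omegaAW η a b ^ 2 - omegaAWa a b ^ 2 ≤ η ^ 2 := by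
  rw [sq_omegaAWa (add_nonneg ha hb)]
  linarith [sq_omegaAW_le (η := η) ha hb]

lemma omegaAW_sub_omegaAWa_le_abs (ha : 0 ≤ a) (hb : 0 ≤ b) :
    omegaAW η a b - omegaAWa a b ≤ |η| := by
  have hωa : 0 ≤ omegaAWa a b := Real.sqrt_nonneg _
  suffices omegaAW η a b ≤ omegaAWa a b + |η| by linarith
  refine le_of_sq_le_sq ?_ (by positivity)
  calc omegaAW η a b ^ 2
      ≤ omegaAWa a b ^ 2 + |η| ^ 2 := by
        rw [sq_abs]; linarith [sq_omegaAW_sub_sq_omegaAWa_le (η := η) ha hb]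
    _ ≤ (omegaAWa a b + |η|) ^ 2 := by
        rw [add_sq]; linarith [mul_nonneg hωa (abs_nonneg η)]

lemma sq_omegaAW_sub_sq_omegaAWa_div_mem_Icc (ha : 0 ≤ a) (hb : 0 < b) :
    (omegaAW η a b ^ 2 - omegaAWa a b ^ 2) / omegaAW η a b ∈ Set.Icc 0 |η| := by
  have hωa := omegaAWa_pos (add_pos_of_nonneg_of_pos ha hb)
  have hle := omegaAWa_le_omegaAW (η := η) (a := a) hb.le
  have hω := hωa.trans_le hle
  refine ⟨div_nonneg (sub_nonneg.mpr (by gcongr)) hω.le, (div_le_iff₀ hω).mpr ?_⟩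
  calc omegaAW η a b ^ 2 - omegaAWa a b ^ 2
      ≤ |η| * |η| := by
        rw [abs_mul_abs_self, ← sq]; exact sq_omegaAW_sub_sq_omegaAWa_le ha hb.le
    _ ≤ |η| * omegaAW η a b := by gcongr; exact abs_le_omegaAW hb.le

lemma sq_omegaAWa_mul_inv_sub_inv_mem_Icc (ha : 0 ≤ a) (hb : 0 < b) :
    omegaAWa a b ^ 2 * ((omegaAWa a b)⁻¹ - (omegaAW η a b)⁻¹) ∈ Set.Icc 0 |η| := by
  have hωa := omegaAWa_pos (add_pos_of_nonneg_of_pos ha hb)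
  have hle := omegaAWa_le_omegaAW (η := η) (a := a) hb.le
  have hω := hωa.trans_le hle
  have hdiff : 0 ≤ omegaAW η a b - omegaAWa a b := sub_nonneg.mpr hle
  have hfactor : omegaAWa a b ^ 2 * ((omegaAWa a b)⁻¹ - (omegaAW η a b)⁻¹)
      = omegaAWa a b / omegaAW η a b * (omegaAW η a b - omegaAWa a b) := by
    field_simp
  rw [hfactor]
  exact ⟨by positivity, (mul_le_of_le_one_left hdiff (div_le_one_of_le₀ hle hω.le)).trans
    (omegaAW_sub_omegaAWa_le_abs ha hb.le)⟩

end Frequencies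

section Coefficients

variable {η a k : ℝ}

lemma sq_div_mul_div_sq_omegaAW_sub_one_le (ha : 0 ≤ a) :
    (η / k * (a / omegaAW η a (k ^ 2) ^ 2 - 1)) ^ 2 ≤ (η / k) ^ 2 := by
  have hle : a ≤ omegaAW η a (k ^ 2) ^ 2 :=
    (le_add_of_nonneg_right (sq_nonneg k)).trans
      ((le_max_left _ _).trans (max_le_sq_omegaAW (sq_nonneg k)))
  have hratio₀ : 0 ≤ a / omegaAW η a (k ^ 2) ^ 2 := by positivity
  have hratio₁ : a / omegaAW η a (k ^ 2) ^ 2 ≤ 1 := div_le_one_of_le₀ hle (sq_nonneg _)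
  rw [mul_pow]
  refine mul_le_of_le_one_right (sq_nonneg _) ((sq_le_one_iff_abs_le_one _).mpr ?_)
  exact abs_le.mpr ⟨by linarith, by linarith⟩

lemma mul_sq_inv_omegaAW_sub_inv_omegaAWa_le (ha : 0 ≤ a) (hk : k ≠ 0) :
    a * ((omegaAW η a (k ^ 2))⁻¹ - (omegaAWa a (k ^ 2))⁻¹) ^ 2 ≤ (η / k) ^ 2 := by
  obtain ⟨hlow, hup⟩ := sq_omegaAWa_mul_inv_sub_inv_mem_Icc (η := η) ha (sq_pos_of_ne_zero hk)
  have hsq := sq_omegaAWa (add_nonneg ha (sq_nonneg k))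
  set ω := omegaAW η a (k ^ 2)
  set ωa := omegaAWa a (k ^ 2)
  rw [div_pow, le_div_iff₀ (sq_pos_of_ne_zero hk)]
  calc a * (ω⁻¹ - ωa⁻¹) ^ 2 * k ^ 2
      = a * k ^ 2 * (ωa⁻¹ - ω⁻¹) ^ 2 := by ring
    _ ≤ ωa ^ 2 * ωa ^ 2 * (ωa⁻¹ - ω⁻¹) ^ 2 := by
        gcongr ?_ * ?_ * _ <;> linarith [sq_nonneg k]
    _ = (ωa ^ 2 * (ωa⁻¹ - ω⁻¹)) ^ 2 := by ring
    _ ≤ |η| ^ 2 := by gcongr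
    _ = η ^ 2 := sq_abs η

lemma sq_omegaAW_div_mul_add_div_omegaAWa_le (ha : 0 ≤ a) (hk : k ≠ 0) :
    (omegaAW η a (k ^ 2) / k * (a / omegaAW η a (k ^ 2) ^ 2 - 1) + k / omegaAWa a (k ^ 2)) ^ 2
      ≤ (η / k) ^ 2 := by
  have hb := sq_pos_of_ne_zero hk
  obtain ⟨hinv₀, hinv₁⟩ := sq_omegaAWa_mul_inv_sub_inv_mem_Icc (η := η) ha hb
  obtain ⟨hdiff₀, hdiff₁⟩ := sq_omegaAW_sub_sq_omegaAWa_div_mem_Icc (η := η) ha hb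
  have hωa := omegaAWa_pos (add_pos_of_nonneg_of_pos ha hb)
  have hω := hωa.trans_le (omegaAWa_le_omegaAW (η := η) hb.le)
  have hsq := sq_omegaAWa (add_nonneg ha hb.le)
  set ω := omegaAW η a (k ^ 2)
  set ωa := omegaAWa a (k ^ 2)
  have hsplit : ω / k * (a / ω ^ 2 - 1) + k / ωa
      = (k ^ 2 * (ωa⁻¹ - ω⁻¹) - (ω ^ 2 - ωa ^ 2) / ω) / k := by
    rw [hsq]; field_simp; ring
  have hinv : 0 ≤ ωa⁻¹ - ω⁻¹ := nonneg_of_mul_nonneg_right hinv₀ (by positivity)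
  have hk₀ : 0 ≤ k ^ 2 * (ωa⁻¹ - ω⁻¹) := by positivity
  have hk₁ : k ^ 2 * (ωa⁻¹ - ω⁻¹) ≤ |η| :=
    (mul_le_mul_of_nonneg_right (by linarith) hinv).trans hinv₁
  rw [hsplit, div_pow, div_pow]
  gcongr ?_ / _
  exact sq_le_sq.mpr (abs_le.mpr ⟨by linarith, by linarith⟩)

end Coefficients

/-- The coefficient vector `u` of the perturbed acoustic eigenmode `U^aw_{+,(k_h,k_z)}`, for
arbitrary real wave numbers. -/
def acousticCoeff (η : ℝ) (kh : Fin 2 → ℝ) (kz : ℝ) : Fin 5 → ℂ :=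
  let a : ℝ := kh 0 ^ 2 + kh 1 ^ 2
  let ω : ℝ := omegaAW η a (kz ^ 2)
  ![1, ((η / kz * (a / ω ^ 2 - 1) : ℝ) : ℂ), ((kh 0 / ω : ℝ) : ℂ), ((kh 1 / ω : ℝ) : ℂ),
    -I * ((ω / kz * (a / ω ^ 2 - 1) : ℝ) : ℂ)]

/-- The coefficient vector `u_a` of the pure acoustic eigenmode `U^aw_{a,+,(k_h,k_z)}`, for
arbitrary real wave numbers. -/
def pureAcousticCoeff (kh : Fin 2 → ℝ) (kz : ℝ) : Fin 5 → ℂ :=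
  let ωa : ℝ := omegaAWa (kh 0 ^ 2 + kh 1 ^ 2) (kz ^ 2)
  ![1, 0, ((kh 0 / ωa : ℝ) : ℂ), ((kh 1 / ωa : ℝ) : ℂ), I * ((kz / ωa : ℝ) : ℂ)]

lemma sum_sq_norm_acousticCoeff_sub (η : ℝ) (kh : Fin 2 → ℝ) (kz : ℝ) :
    let a : ℝ := kh 0 ^ 2 + kh 1 ^ 2
    let ω : ℝ := omegaAW η a (kz ^ 2)
    let ωa : ℝ := omegaAWa a (kz ^ 2)
    ∑ i, ‖acousticCoeff η kh kz i - pureAcousticCoeff kh kz i‖ ^ 2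
      = (η / kz * (a / ω ^ 2 - 1)) ^ 2 + a * (ω⁻¹ - ωa⁻¹) ^ 2
        + (ω / kz * (a / ω ^ 2 - 1) + kz / ωa) ^ 2 := by
  intro a ω ωa
  have norm_sq_ofReal (x : ℝ) : ‖(x : ℂ)‖ ^ 2 = x ^ 2 := by rw [norm_real, Real.norm_eq_abs, sq_abs]
  have norm_sq_last (x y : ℝ) : ‖-I * (x : ℂ) - I * (y : ℂ)‖ ^ 2 = (x + y) ^ 2 := by
    have factor : -I * (x : ℂ) - I * (y : ℂ) = -I * ((x + y : ℝ) : ℂ) := by push_cast; ring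
    rw [factor, norm_mul, norm_neg, norm_I, one_mul, norm_sq_ofReal]
  calc ∑ i, ‖acousticCoeff η kh kz i - pureAcousticCoeff kh kz i‖ ^ 2
      = ‖(1 : ℂ) - 1‖ ^ 2 + ‖((η / kz * (a / ω ^ 2 - 1) : ℝ) : ℂ) - 0‖ ^ 2
        + ‖((kh 0 / ω : ℝ) : ℂ) - ((kh 0 / ωa : ℝ) : ℂ)‖ ^ 2
        + ‖((kh 1 / ω : ℝ) : ℂ) - ((kh 1 / ωa : ℝ) : ℂ)‖ ^ 2
        + ‖-I * ((ω / kz * (a / ω ^ 2 - 1) : ℝ) : ℂ) - I * ((kz / ωa : ℝ) : ℂ)‖ ^ 2 :=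
        Fin.sum_univ_five _
    _ = (η / kz * (a / ω ^ 2 - 1)) ^ 2 + (kh 0 / ω - kh 0 / ωa) ^ 2 + (kh 1 / ω - kh 1 / ωa) ^ 2
        + (ω / kz * (a / ω ^ 2 - 1) + kz / ωa) ^ 2 := by
        rw [norm_sq_last, sub_self, sub_zero, ← ofReal_sub, ← ofReal_sub]
        simp only [norm_sq_ofReal, norm_zero, ne_eq, OfNat.ofNat_ne_zero, not_false_eq_true,
          zero_pow, zero_add]
    _ = _ := by simp only [a]; ring

theorem stmt_19_general (η : ℝ) (kh : Fin 2 → ℝ) {kz : ℝ} (hkz : kz ≠ 0) :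
    vnorm (fun i => acousticCoeff η kh kz i - pureAcousticCoeff kh kz i) ≤ √3 * |η / kz| := by
  have ha : 0 ≤ kh 0 ^ 2 + kh 1 ^ 2 := by positivity
  refine Real.sqrt_le_iff.mpr ⟨by positivity, ?_⟩
  rw [sum_sq_norm_acousticCoeff_sub, mul_pow √3, Real.sq_sqrt zero_le_three, sq_abs]
  linarith [sq_div_mul_div_sq_omegaAW_sub_one_le (η := η) (k := kz) ha,
    mul_sq_inv_omegaAW_sub_inv_omegaAWa_le (η := η) ha hkz,
    sq_omegaAW_div_mul_add_div_omegaAWa_le (η := η) ha hkz]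

/-- Acoustic eigenvector comparison, coefficient form of
estimate (5.47) in Corollary 5.4.  Let `0 < η ≤ 1`, `k_h ∈ 2πℤ²`,
`k_z ∈ 2πℤ ∖ {0}`, `a := |k_h|²`, `ω := ω^aw(η,k_h,k_z)`,
`ω_a := ω^aw_a(k_h,k_z)`.  With
`u := (1, (η/k_z)(a/ω² − 1), k_h/ω, −i(ω/k_z)(a/ω² − 1))` (Fourier coefficient
vector of the perturbed acoustic eigenmode) and
`u_a := (1, 0, k_h/ω_a, ik_z/ω_a)` (Fourier coefficient vector of the pure
acoustic eigenmode), one has `|u − u_a| ≤ 10η` in the Euclidean norm of `ℂ⁵`,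
uniformly in `(k_h,k_z)`. -/
theorem stmt_19 (η : ℝ) (hη0 : 0 < η) (hη1 : η ≤ 1)
    (m : Fin 2 → ℤ) (n : ℤ) (hn : n ≠ 0) :
    let kh : Fin 2 → ℝ := fun i => 2 * Real.pi * (m i : ℝ)
    let kz : ℝ := 2 * Real.pi * (n : ℝ)
    let a : ℝ := kh 0 ^ 2 + kh 1 ^ 2
    let b : ℝ := kz ^ 2
    let ω : ℝ := omegaAW η a b
    let ωa : ℝ := omegaAWa a b
    let u : Fin 5 → ℂ :=
      ![1, (((η / kz) * (a / ω ^ 2 - 1) : ℝ) : ℂ), ((kh 0 / ω : ℝ) : ℂ),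
        ((kh 1 / ω : ℝ) : ℂ), -I * (((ω / kz) * (a / ω ^ 2 - 1) : ℝ) : ℂ)]
    let ua : Fin 5 → ℂ :=
      ![1, 0, ((kh 0 / ωa : ℝ) : ℂ), ((kh 1 / ωa : ℝ) : ℂ),
        I * ((kz / ωa : ℝ) : ℂ)]
    vnorm (fun i => u i - ua i) ≤ 10 * η := by
  intro kh kz a b ω ωa u ua
  have hkz : 1 ≤ |kz| := one_le_abs_two_pi_mul_intCast hn
  calc vnorm (fun i => u i - ua i)
      ≤ √3 * |η / kz| := stmt_19_general η kh (abs_pos.mp (one_pos.trans_le hkz))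
    _ ≤ 10 * η := by
        rw [abs_div, abs_of_pos hη0]
        gcongr
        · exact Real.sqrt_le_iff.mpr (by norm_num)
        · exact div_le_self hη0.le hkz
end
end
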